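/- For Leontief utilities, a strategy profile (delta_i)_{i in N} is a Nash equilibrium if and only if for each agent i, supp(delta_i) is contained in the set T_{delta,i} of i's critical alternatives, where delta is the aggregate distribution. -/

import Mathlib

def IsStrategy (n m : ℕ) (d : Fin m → ℝ) : Prop :=
  (∀ x, 0 ≤ d x) ∧ ∑ x, d x = 1 / n

def IsNash (n m : ℕ) (u : Fin n → (Fin m → ℝ) → ℝ) (δ : Fin n → Fin m → ℝ) : Prop :=
  (∀ i, IsStrategy n m (δ i)) ∧
  ∀ i, ∀ d, IsStrategy n m d →
    u i ((∑ j, δ j) - δ i + d) ≤ u i (∑ j, δ j)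

/-- Alternatives valued positively by agent `i`. -/
noncomputable def Apos {n m : ℕ} (v : Fin n → Fin m → ℝ) (i : Fin n) : Finset (Fin m) :=
  Finset.univ.filter (fun x => 0 < v i x)

/-- Leontief utility of agent `i`. -/
noncomputable def leontief {n m : ℕ} (v : Fin n → Fin m → ℝ)
    (h : ∀ i, (Apos v i).Nonempty) (i : Fin n) (d : Fin m → ℝ) : ℝ :=
  (Apos v i).inf' (h i) (fun x => d x / v i x)

/-- Critical alternatives of agent `i` under distribution `d`. -/
noncomputable def critical {n m : ℕ} (v : Fin n → Fin m → ℝ)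
    (h : ∀ i, (Apos v i).Nonempty) (i : Fin n) (d : Fin m → ℝ) : Finset (Fin m) :=
  (Apos v i).filter (fun x => d x / v i x = leontief v h i d)

/-- with Leontief utilities, a profile is a Nash equilibrium iff
each agent contributes only to her critical alternatives. -/
theorem leontief_nash_iff_support_critical
    (n m : ℕ) (hn : 0 < n)
    (v : Fin n → Fin m → ℝ) (hv : ∀ i x, 0 ≤ v i x)
    (hpos : ∀ i, (Apos v i).Nonempty)
    (δ : Fin n → Fin m → ℝ) :
    IsNash n m (leontief v hpos) δ ↔
      (∀ i, IsStrategy n m (δ i)) ∧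
      (∀ i, ∀ x, 0 < δ i x → x ∈ critical v hpos i (∑ j, δ j)) := by
  constructor
  · rintro ⟨hs, hN⟩
    refine ⟨hs, fun i x hx => ?_⟩
    by_contra hc
    set D := ∑ j, δ j with hD
    set u := leontief v hpos i D with hu
    have hle : ∀ y ∈ Apos v i, u ≤ D y / v i y := fun y hy =>
      Finset.inf'_le (fun x => D x / v i x) hy
    have hvp : ∀ y ∈ Apos v i, 0 < v i y := fun y hy => by
      simpa [Apos] using hy
    have hm : (0 : ℝ) < m := by
      have : 0 < m := lt_of_le_of_lt (Nat.zero_le _) x.2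
      exact_mod_cast this
    obtain ⟨ε, hε, hε1, hε2⟩ : ∃ ε : ℝ, 0 < ε ∧ ε ≤ δ i x ∧
        (x ∈ Apos v i → ε ≤ D x - u * v i x) := by
      by_cases hxA : x ∈ Apos v i
      · have h1 : u < D x / v i x := by
          refine lt_of_le_of_ne (hle x hxA) fun h => hc ?_
          simp only [critical, Finset.mem_filter]
          exact ⟨hxA, h.symm⟩
        rw [lt_div_iff₀ (hvp x hxA)] at h1
        exact ⟨min (δ i x) (D x - u * v i x), lt_min hx (by linarith),
          min_le_left _ _, fun _ => min_le_right _ _⟩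
      · exact ⟨δ i x, hx, le_rfl, fun h => absurd h hxA⟩
    have hem : 0 < ε / m := div_pos hε hm
    have key := hN i (fun y => δ i y - (if y = x then ε else 0) + ε / m) (by
      refine ⟨fun y => ?_, ?_⟩
      · have h0 := (hs i).1 y
        by_cases h : y = x
        · subst h
          simp only [if_true]
          linarith
        · simp only [h, if_false]
          linarith
      · rw [Finset.sum_add_distrib, Finset.sum_sub_distrib, (hs i).2]
        simp
        field_simp
        ring)
    refine absurd key (not_le.mpr ?_)
    change u < (Apos v i).inf' (hpos i) _
    rw [Finset.lt_inf'_iff]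
    intro y hy
    have h1 := hle y hy
    rw [le_div_iff₀ (hvp y hy)] at h1
    rw [lt_div_iff₀ (hvp y hy)]
    simp only [Pi.add_apply, Pi.sub_apply]
    by_cases h : y = x
    · subst h
      have := hε2 hy
      simp only [if_true]
      linarith
    · simp only [h, if_false]
      linarith
  · rintro ⟨hs, hC⟩
    refine ⟨hs, fun i d hd => ?_⟩
    obtain ⟨y, hy, hdy⟩ : ∃ y, 0 < δ i y ∧ d y ≤ δ i y := by
      by_contra hcon
      push Not at hcon
      have hle : ∀ y ∈ Finset.univ, δ i y ≤ d y := fun y _ => by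
        rcases ((hs i).1 y).lt_or_eq with h | h
        · exact (hcon y h).le
        · rw [← h]
          exact hd.1 y
      have hsum : 0 < ∑ y, δ i y := by
        rw [(hs i).2]
        positivity
      obtain ⟨y, hy, hy0⟩ := Finset.exists_lt_of_sum_lt
        (s := Finset.univ) (f := fun _ : Fin m => (0 : ℝ)) (g := δ i) (by simpa using hsum)
      have := Finset.sum_lt_sum hle ⟨y, hy, hcon y hy0⟩
      rw [(hs i).2, hd.2] at this
      exact lt_irrefl _ this
    have hc := hC i y hy
    simp only [critical, Finset.mem_filter] at hc
    obtain ⟨hyA, hyu⟩ := hc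
    have hvp : 0 < v i y := by simpa [Apos] using hyA
    rw [← hyu]
    refine (Finset.inf'_le _ hyA).trans ?_
    refine div_le_div_of_nonneg_right ?_ hvp.le
    simp only [Pi.add_apply, Pi.sub_apply]
    linarith
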